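/- Fix α > 0 and δ ∈ (0,1). Under assumptions (A1)–(A6), with probability at least 1−δ over the datasets, the PRO-RL output ŵ satisfies ‖ŵ − w*_α‖_{2,d^D} ≤ √(4·ε_stat/(α·M_f)), and consequently ‖d̂ − d*_α‖₁ ≤ √(4·ε_stat/(α·M_f)), where d̂(s,a) = ŵ(s,a)·d^D(s,a) and ‖·‖₁ is the total (entrywise) ℓ₁ norm over S×A. -/

import Mathlib

open MeasureTheory
open scoped BigOperators ENNReal

namespace ProRL

/-- The discrete measure on a type induced by a real-valued weight function. -/
noncomputable def discMeasure {X : Type*} [MeasurableSpace X] (p : X → ℝ) : Measure X :=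
  Measure.sum fun x => ENNReal.ofReal (p x) • Measure.dirac x

variable {S A : Type*} [Fintype S] [Fintype A]

/-- The `t`-step state-action distribution of policy `π` started from `μ0`. -/
noncomputable def saDist (P : S → A → S → ℝ) (μ0 : S → ℝ) (π : S → A → ℝ) :
    ℕ → S → A → ℝ
  | 0 => fun s a => μ0 s * π s a
  | t + 1 => fun s a =>
      (∑ s' : S, ∑ a' : A, saDist P μ0 π t s' a' * P s' a' s) * π s a

/-- The discounted state-action occupancy `d^π(s,a)`. -/
noncomputable def occ (P : S → A → S → ℝ) (μ0 : S → ℝ) (γ : ℝ) (π : S → A → ℝ)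
    (s : S) (a : A) : ℝ :=
  (1 - γ) * ∑' t : ℕ, γ ^ t * saDist P μ0 π t s a

/-- The (normalized) expected discounted return `J(π) = E_{d^π}[r]`. -/
noncomputable def Jret (P : S → A → S → ℝ) (r : S → A → ℝ) (μ0 : S → ℝ) (γ : ℝ)
    (π : S → A → ℝ) : ℝ :=
  ∑ s : S, ∑ a : A, occ P μ0 γ π s a * r s a

/-- `π` is a (stationary, stochastic) policy. -/
def IsPolicy (π : S → A → ℝ) : Prop :=
  (∀ s a, 0 ≤ π s a) ∧ ∀ s, ∑ a : A, π s a = 1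

/-- The Bellman residual `e_v(s,a) = r(s,a) + γ ∑_{s'} P(s'|s,a) v(s') − v(s)`. -/
noncomputable def eV (P : S → A → S → ℝ) (r : S → A → ℝ) (γ : ℝ) (v : S → ℝ)
    (s : S) (a : A) : ℝ :=
  r s a + γ * ∑ s' : S, P s a s' * v s' - v s

/-- The population Lagrangian `L_α(v,w)`. -/
noncomputable def Lag (P : S → A → S → ℝ) (r : S → A → ℝ) (μ0 : S → ℝ) (γ : ℝ)
    (dD : S → A → ℝ) (f : ℝ → ℝ) (α : ℝ) (v : S → ℝ) (w : S → A → ℝ) : ℝ :=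
  (1 - γ) * ∑ s : S, μ0 s * v s
    - α * ∑ s : S, ∑ a : A, dD s a * f (w s a)
    + ∑ s : S, ∑ a : A, dD s a * (w s a * eV P r γ v s a)

/-- The empirical Lagrangian `L̂_α(v,w)` built from the transition dataset `D`
(`D i = ((sᵢ,aᵢ), s'ᵢ)`, with `rᵢ = r sᵢ aᵢ`) and initial-state dataset `D0`. -/
noncomputable def empLag (r : S → A → ℝ) (γ : ℝ) (f : ℝ → ℝ) (α : ℝ) {n n0 : ℕ}
    (D : Fin n → (S × A) × S) (D0 : Fin n0 → S) (v : S → ℝ) (w : S → A → ℝ) : ℝ :=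
  (1 - γ) * ((n0 : ℝ)⁻¹ * ∑ j : Fin n0, v (D0 j))
    - α * ((n : ℝ)⁻¹ * ∑ i : Fin n, f (w (D i).1.1 (D i).1.2))
    + (n : ℝ)⁻¹ * ∑ i : Fin n,
        w (D i).1.1 (D i).1.2 *
          (r (D i).1.1 (D i).1.2 + γ * v (D i).2 - v (D i).1.1)

/-- Per-state normalization of a state-action weight into a policy
(uniform where the state marginal is not positive). -/
noncomputable def normPolicy (d : S → A → ℝ) (s : S) (a : A) : ℝ :=
  if 0 < ∑ a' : A, d s a' then d s a / ∑ a' : A, d s a'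
  else (Fintype.card A : ℝ)⁻¹

/-- Policy extraction from a density ratio `w` and a behavior policy `piD`
(uniform where the normalizer vanishes). -/
noncomputable def extractPolicy (piD w : S → A → ℝ) (s : S) (a : A) : ℝ :=
  if 0 < ∑ a' : A, w s a' * piD s a' then
    w s a * piD s a / ∑ a' : A, w s a' * piD s a'
  else (Fintype.card A : ℝ)⁻¹

/-- Behavior policy `π_D(a|s)` obtained from the data distribution `d^D`. -/
noncomputable def behPolicy (dD : S → A → ℝ) : S → A → ℝ := normPolicy dD

/-- The state-action measure `d(s,a) = w(s,a)·d^D(s,a)`. -/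
noncomputable def dstar (dD w : S → A → ℝ) : S → A → ℝ := fun s a => w s a * dD s a

/-- The weighted `L²(d^D)` norm of a state-action function. -/
noncomputable def l2nrm (dD g : S → A → ℝ) : ℝ :=
  Real.sqrt (∑ s : S, ∑ a : A, dD s a * g s a ^ 2)

/-- `‖π(·|s) − π'(·|s)‖₁`. -/
noncomputable def l1Pol (π π' : S → A → ℝ) (s : S) : ℝ := ∑ a : A, |π s a - π' s a|

/-- `E_{s ∼ d}[‖π(·|s) − π'(·|s)‖₁]` where `d` is a state-action distribution. -/
noncomputable def expL1 (d π π' : S → A → ℝ) : ℝ :=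
  ∑ s : S, (∑ a : A, d s a) * l1Pol π π' s

/-- The statistical error term `ε_stat`. -/
noncomputable def epsStat (γ α Bv Bf Bw Be δ : ℝ) (nV nW n n0 : ℕ) : ℝ :=
  (1 - γ) * Bv * Real.sqrt (2 * Real.log (4 * (nV : ℝ) / δ) / (n0 : ℝ))
    + (α * Bf + Bw * Be) *
        Real.sqrt (2 * Real.log (4 * ((nV : ℝ) * (nW : ℝ)) / δ) / (n : ℝ))

/-- The Bellman flow equations for a state-action measure `d`. -/
def BellmanFlow (P : S → A → S → ℝ) (μ0 : S → ℝ) (γ : ℝ) (d : S → A → ℝ) : Prop :=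
  ∀ s : S, ∑ a : A, d s a
    = (1 - γ) * μ0 s + γ * ∑ s' : S, ∑ a' : A, P s' a' s * d s' a'

/-- `(v,w)` is a saddle point of `max_{w ≥ 0} min_v L_α(v,w)`. -/
def IsSaddle (P : S → A → S → ℝ) (r : S → A → ℝ) (μ0 : S → ℝ) (γ : ℝ)
    (dD : S → A → ℝ) (f : ℝ → ℝ) (α : ℝ) (v : S → ℝ) (w : S → A → ℝ) : Prop :=
  (∀ s a, 0 ≤ w s a) ∧
  (∀ v' : S → ℝ, Lag P r μ0 γ dD f α v w ≤ Lag P r μ0 γ dD f α v' w) ∧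
  (∀ w' : S → A → ℝ, (∀ s a, 0 ≤ w' s a) →
    Lag P r μ0 γ dD f α v w' ≤ Lag P r μ0 γ dD f α v w)

/-- `(v,w)` is a saddle point of `max_{0 ≤ w ≤ Bw} min_v L_α(v,w)` (constrained LP). -/
def IsSaddleB (P : S → A → S → ℝ) (r : S → A → ℝ) (μ0 : S → ℝ) (γ : ℝ)
    (dD : S → A → ℝ) (f : ℝ → ℝ) (α Bw : ℝ) (v : S → ℝ) (w : S → A → ℝ) : Prop :=
  (∀ s a, 0 ≤ w s a ∧ w s a ≤ Bw) ∧
  (∀ v' : S → ℝ, Lag P r μ0 γ dD f α v w ≤ Lag P r μ0 γ dD f α v' w) ∧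
  (∀ w' : S → A → ℝ, (∀ s a, 0 ≤ w' s a ∧ w' s a ≤ Bw) →
    Lag P r μ0 γ dD f α v w' ≤ Lag P r μ0 γ dD f α v w)

/-- `(vhat, what)` is an exact max-min point of the empirical Lagrangian over `V × W`:
`vhat ∈ argmin_{v ∈ V} L̂(v, what)` and `what ∈ argmax_{w ∈ W} min_{v ∈ V} L̂(v, w)`. -/
def IsProRLOutput (r : S → A → ℝ) (γ : ℝ) (f : ℝ → ℝ) (α : ℝ)
    (V : Finset (S → ℝ)) (W : Finset (S → A → ℝ)) {n n0 : ℕ}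
    (D : Fin n → (S × A) × S) (D0 : Fin n0 → S)
    (vhat : S → ℝ) (what : S → A → ℝ) : Prop :=
  vhat ∈ V ∧ what ∈ W ∧
  (∀ v ∈ V, empLag r γ f α D D0 vhat what ≤ empLag r γ f α D D0 v what) ∧
  ∀ w ∈ W, ∀ vw ∈ V,
    (∀ v ∈ V, empLag r γ f α D D0 vw w ≤ empLag r γ f α D D0 v w) →
      empLag r γ f α D D0 vw w ≤ empLag r γ f α D D0 vhat what

/-- Weight of a transition tuple `((s,a),s')` under `(s,a) ∼ d^D`, `s' ∼ P(·|s,a)`. -/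
noncomputable def tupleWeight (P : S → A → S → ℝ) (dD : S → A → ℝ)
    (x : (S × A) × S) : ℝ :=
  dD x.1.1 x.1.2 * P x.1.1 x.1.2 x.2

/-- The joint law of the transition dataset `D` (i.i.d. from `d^D ⊗ P`) and the
initial-state dataset `D0` (i.i.d. from `μ0`). -/
noncomputable def dataMeasure [MeasurableSpace S] [MeasurableSpace A]
    (P : S → A → S → ℝ) (dD : S → A → ℝ) (μ0 : S → ℝ) (n n0 : ℕ) :
    Measure ((Fin n → (S × A) × S) × (Fin n0 → S)) :=
  (Measure.pi fun _ : Fin n => discMeasure (tupleWeight P dD)).prod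
    (Measure.pi fun _ : Fin n0 => discMeasure μ0)

/-- The joint law of datasets `D1`, `D2` (both i.i.d. from `d^D ⊗ P`) and `D0`
(i.i.d. from `μ0`), used by PRO-RL-BC. -/
noncomputable def dataMeasure3 [MeasurableSpace S] [MeasurableSpace A]
    (P : S → A → S → ℝ) (dD : S → A → ℝ) (μ0 : S → ℝ) (n1 n2 n0 : ℕ) :
    Measure ((Fin n1 → (S × A) × S) × (Fin n2 → (S × A) × S) × (Fin n0 → S)) :=
  (Measure.pi fun _ : Fin n1 => discMeasure (tupleWeight P dD)).prod
    ((Measure.pi fun _ : Fin n2 => discMeasure (tupleWeight P dD)).prod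
      (Measure.pi fun _ : Fin n0 => discMeasure μ0))

/-- `v` is the optimal value function: it satisfies the Bellman optimality equation. -/
def IsOptValue [Nonempty A] (P : S → A → S → ℝ) (r : S → A → ℝ) (γ : ℝ)
    (v : S → ℝ) : Prop :=
  ∀ s : S, v s = Finset.univ.sup' Finset.univ_nonempty
    (fun a : A => r s a + γ * ∑ s' : S, P s a s' * v s')

/-- Basic assumptions on the MDP, the regularizer-free data, and the data distribution. -/
structure MDPAssumptions (P : S → A → S → ℝ) (r : S → A → ℝ) (μ0 : S → ℝ) (γ : ℝ)
    (dD : S → A → ℝ) : Prop where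
  P_nonneg : ∀ s a s', 0 ≤ P s a s'
  P_sum : ∀ s a, ∑ s' : S, P s a s' = 1
  r_nonneg : ∀ s a, 0 ≤ r s a
  r_le_one : ∀ s a, r s a ≤ 1
  γ_nonneg : 0 ≤ γ
  γ_lt_one : γ < 1
  μ0_pos : ∀ s, 0 < μ0 s
  μ0_sum : ∑ s : S, μ0 s = 1
  dD_nonneg : ∀ s a, 0 ≤ dD s a
  dD_sum : ∑ s : S, ∑ a : A, dD s a = 1

/-- Regularity of the regularizer `f`: continuously differentiable with derivative `f'`,
`M_f`-strongly convex, and with `|f'| ≤ Bf'`, `|f| ≤ Bf` on `[0, Bw]`. -/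
structure RegAssumptions (f f' : ℝ → ℝ) (Mf Bw Bf' Bf : ℝ) : Prop where
  deriv : ∀ x, HasDerivAt f (f' x) x
  strong : StrongConvexOn Set.univ Mf f
  Mf_pos : 0 < Mf
  f'_bdd : ∀ x, 0 ≤ x → x ≤ Bw → |f' x| ≤ Bf'
  f_bdd : ∀ x, 0 ≤ x → x ≤ Bw → |f x| ≤ Bf

/-- `w` is an optimal density ratio of the unregularized LP (the set `W*₀`). -/
def OptRatio (P : S → A → S → ℝ) (r : S → A → ℝ) (μ0 : S → ℝ) (γ : ℝ)
    (dD : S → A → ℝ) (w : S → A → ℝ) : Prop :=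
  (∀ s a, 0 ≤ w s a) ∧ BellmanFlow P μ0 γ (dstar dD w) ∧
  ∀ w' : S → A → ℝ, (∀ s a, 0 ≤ w' s a) → BellmanFlow P μ0 γ (dstar dD w') →
    ∑ s : S, ∑ a : A, dstar dD w' s a * r s a
      ≤ ∑ s : S, ∑ a : A, dstar dD w s a * r s a

/-!
By Hoeffding's inequality and a union bound over `V × W`, with probability at least `1 − δ` the
empirical and the population Lagrangian differ by at most `ε_stat` on all of `V × W`. On this event
`ŵ` loses at most `2 ε_stat` in the population objective `L_α(v*, ·)`: its empirical max-min value
beats `min_{v ∈ V} L̂_α(v, w*)`, which is at least `L_α(v*, w*) − ε_stat` because `v*` minimizes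
`L_α(·, w*)`, and it is at most `L̂_α(v*, ŵ)` because `v̂` minimizes `L̂_α(·, ŵ)`.

For fixed `v*`, the objective `L_α(v*, w)` is a constant plus the sum over `(s, a)` of `d^D(s, a)`
times an `α M_f`-strongly concave function of the single coordinate `w(s, a)`. Hence it falls off
quadratically, in the norm `‖·‖_{2,d^D}`, from its maximizer `w*`; this turns the loss `2 ε_stat`
into the bound on `‖ŵ − w*‖_{2,d^D}`. Since `d^D` is a probability distribution, Jensen's inequality
bounds the `ℓ¹` distance by the same quantity.
-/

section Concentration

open ProbabilityTheory
open scoped NNReal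

/-- The empirical mean `k⁻¹ ∑ᵢ g (xᵢ)` of `g` over a sample `x` of size `k`. -/
noncomputable def empiricalMean {X : Type*} {k : ℕ} (g : X → ℝ) (x : Fin k → X) : ℝ :=
  (k : ℝ)⁻¹ * ∑ i, g (x i)

lemma measureReal_sqrt_lt_abs_le_of_hasSubgaussianMGF {Ω : Type*} [MeasurableSpace Ω]
    {μ : Measure Ω} [IsFiniteMeasure μ] {Z : Ω → ℝ} {c : ℝ≥0} (hZ : HasSubgaussianMGF Z c μ)
    (L : ℝ) :
    μ.real {ω | Real.sqrt (2 * c * L) < |Z ω|} ≤ 2 * Real.exp (-L) := by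
  rcases eq_zero_or_pos c with rfl | hc
  · have hnull : μ {ω | Real.sqrt (2 * (0 : ℝ≥0) * L) < |Z ω|} = 0 := by
      refine measure_mono_null (fun ω hω => ?_) hZ.ae_eq_zero_of_hasSubgaussianMGF_zero
      simpa using hω
    rw [measureReal_def, hnull]
    positivity
  have hexp : Real.exp (-Real.sqrt (2 * c * L) ^ 2 / (2 * c)) ≤ Real.exp (-L) := by
    have hsq : 2 * c * L ≤ Real.sqrt (2 * c * L) ^ 2 := by
      rw [Real.sq_sqrt']
      exact le_max_left _ _
    rw [Real.exp_le_exp, div_le_iff₀ (by positivity)]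
    linarith
  calc μ.real {ω | Real.sqrt (2 * c * L) < |Z ω|}
      ≤ μ.real ({ω | Real.sqrt (2 * c * L) ≤ Z ω} ∪ {ω | Real.sqrt (2 * c * L) ≤ (-Z) ω}) :=
        measureReal_mono fun ω (hω : Real.sqrt (2 * c * L) < |Z ω|) =>
          (lt_abs.1 hω).imp (fun h => h.le) fun h => h.le
    _ ≤ Real.exp (-L) + Real.exp (-L) :=
        (measureReal_union_le _ _).trans <| add_le_add
          ((hZ.measure_ge_le (Real.sqrt_nonneg _)).trans hexp)
          ((hZ.neg.measure_ge_le (Real.sqrt_nonneg _)).trans hexp)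
    _ = 2 * Real.exp (-L) := (two_mul _).symm

variable {X : Type*} [MeasurableSpace X] {ν : Measure X} [IsProbabilityMeasure ν]

lemma hasSubgaussianMGF_empiricalMean_sub_integral {g : X → ℝ} (hg : AEMeasurable g ν) {B : ℝ≥0}
    (hB : ∀ᵐ x ∂ν, |g x| ≤ B) (k : ℕ) [NeZero k] :
    HasSubgaussianMGF (fun x : Fin k → X => empiricalMean g x - ∫ y, g y ∂ν)
      (B ^ 2 / k) (Measure.pi fun _ => ν) := by
  have hindep : iIndepFun (fun (i : Fin k) (x : Fin k → X) => g (x i) - ∫ y, g y ∂ν)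
      (Measure.pi fun _ => ν) :=
    iIndepFun_pi (X := fun _ y => g y - ∫ y, g y ∂ν) fun _ => hg.sub_const _
  have hcoord (i : Fin k) : HasSubgaussianMGF (fun x : Fin k → X => g (x i) - ∫ y, g y ∂ν)
      (B ^ 2) (Measure.pi fun _ => ν) := by
    have hmp := measurePreserving_eval (fun _ : Fin k => ν) i
    have hhalf : ‖(B : ℝ) - -B‖₊ / 2 = B := by
      ext
      simp [← two_mul]
    have hsub := hasSubgaussianMGF_of_mem_Icc hg (hB.mono fun x hx => abs_le.1 hx)
    rw [hhalf, ← hmp.map_eq] at hsub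
    have hpull := hsub.of_map hmp.measurable.aemeasurable
    rwa [hmp.map_eq] at hpull
  have hk : (k : ℝ) ≠ 0 := NeZero.ne _
  convert (HasSubgaussianMGF.sum_of_iIndepFun hindep
    (s := Finset.univ) fun i _ => hcoord i).const_mul (k : ℝ)⁻¹ using 1
  · ext x
    simp [empiricalMean, Finset.sum_sub_distrib, mul_sub, hk]
  · refine NNReal.eq ?_
    change ((B ^ 2 / k : ℝ≥0) : ℝ) = ((k : ℝ)⁻¹) ^ 2 * ((∑ _i : Fin k, B ^ 2 : ℝ≥0) : ℝ)
    simp only [Finset.sum_const, Finset.card_univ, Fintype.card_fin, nsmul_eq_mul, NNReal.coe_mul,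
      NNReal.coe_div, NNReal.coe_pow, NNReal.coe_natCast]
    field_simp

lemma measure_pi_exists_lt_abs_empiricalMean_sub_integral_le {ι : Type*} (I : Finset ι)
    {g : ι → X → ℝ} (hg : ∀ i ∈ I, AEMeasurable (g i) ν) {B : ℝ}
    (hB : ∀ i ∈ I, ∀ᵐ x ∂ν, |g i x| ≤ B) (k : ℕ) [NeZero k] {η : ℝ} (hη : 0 < η) :
    (Measure.pi fun _ : Fin k => ν)
      {x | ∃ i ∈ I, B * Real.sqrt (2 * Real.log (2 * I.card / η) / k)
        < |empiricalMean (g i) x - ∫ y, g i y ∂ν|} ≤ ENNReal.ofReal η := by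
  rcases I.eq_empty_or_nonempty with rfl | hI
  · simp
  have hB0 : 0 ≤ B := by
    obtain ⟨i, hi⟩ := hI
    obtain ⟨x, hx⟩ := (hB i hi).exists
    exact (abs_nonneg _).trans hx
  lift B to ℝ≥0 using hB0
  set L := Real.log (2 * I.card / η)
  have hcard : (0 : ℝ) < I.card := by exact_mod_cast hI.card_pos
  have hradius : (B : ℝ) * Real.sqrt (2 * L / k) = Real.sqrt (2 * (B ^ 2 / k : ℝ≥0) * L) := by
    rw [show 2 * ((B ^ 2 / k : ℝ≥0) : ℝ) * L = (B : ℝ) ^ 2 * (2 * L / k) by push_cast; ring,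
      Real.sqrt_mul (sq_nonneg _), Real.sqrt_sq B.coe_nonneg]
  have hunion : {x : Fin k → X | ∃ i ∈ I, (B : ℝ) * Real.sqrt (2 * L / k)
        < |empiricalMean (g i) x - ∫ y, g i y ∂ν|}
      = ⋃ i ∈ I, {x | Real.sqrt (2 * (B ^ 2 / k : ℝ≥0) * L)
        < |empiricalMean (g i) x - ∫ y, g i y ∂ν|} := by
    ext x
    simp only [hradius, Set.mem_ofPred_eq, Set.mem_iUnion, exists_prop]
  rw [hunion, ENNReal.le_ofReal_iff_toReal_le (measure_ne_top _ _) hη.le]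
  calc _ ≤ ∑ i ∈ I, 2 * Real.exp (-L) :=
        (measureReal_biUnion_finset_le _ _).trans <| Finset.sum_le_sum fun i hi =>
          measureReal_sqrt_lt_abs_le_of_hasSubgaussianMGF
            (hasSubgaussianMGF_empiricalMean_sub_integral (hg i hi) (hB i hi) k) L
    _ = η := by
        rw [Finset.sum_const, nsmul_eq_mul, Real.exp_neg,
          Real.exp_log (div_pos (mul_pos two_pos hcard) hη)]
        field_simp

lemma one_sub_add_le_prod_compl_prod_compl {Y : Type*} [MeasurableSpace Y] (μ : Measure X)
    [IsProbabilityMeasure μ] (ρ : Measure Y) [IsProbabilityMeasure ρ] (E : Set X) (F : Set Y) :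
    1 - (μ E + ρ F) ≤ (μ.prod ρ) (Eᶜ ×ˢ Fᶜ) := by
  rw [tsub_le_iff_left]
  calc 1 = (μ.prod ρ) ((E ×ˢ Set.univ ∪ Set.univ ×ˢ F) ∪ Eᶜ ×ˢ Fᶜ) := by
        rw [← measure_univ (μ := μ.prod ρ)]
        congr 1
        ext ⟨x, y⟩
        by_cases hx : x ∈ E <;> by_cases hy : y ∈ F <;> simp [hx, hy]
    _ ≤ (μ.prod ρ) (E ×ˢ Set.univ) + (μ.prod ρ) (Set.univ ×ˢ F) + (μ.prod ρ) (Eᶜ ×ˢ Fᶜ) :=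
        (measure_union_le _ _).trans (add_le_add_left (measure_union_le _ _) _)
    _ = μ E + ρ F + (μ.prod ρ) (Eᶜ ×ˢ Fᶜ) := by simp [Measure.prod_prod]

end Concentration

section DiscreteMeasure

variable {X : Type*} [Fintype X] [MeasurableSpace X] {p : X → ℝ}

lemma isProbabilityMeasure_discMeasure (h0 : ∀ x, 0 ≤ p x)
    (h1 : ∑ x, p x = 1) : IsProbabilityMeasure (discMeasure p) := by
  constructor
  rw [discMeasure, Measure.sum_apply _ MeasurableSet.univ, tsum_fintype]
  simp [← ENNReal.ofReal_sum_of_nonneg fun x _ => h0 x, h1]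

lemma integral_discMeasure [MeasurableSingletonClass X] (h0 : ∀ x, 0 ≤ p x) (g : X → ℝ) :
    ∫ x, g x ∂discMeasure p = ∑ x, p x * g x := by
  rw [discMeasure, Measure.sum_fintype, integral_finsetSum_measure]
  · simp [integral_smul_measure, ENNReal.toReal_ofReal (h0 _)]
  · intro x _
    exact (integrable_dirac (by simp)).smul_measure ENNReal.ofReal_ne_top

lemma measure_pi_discMeasure_exists_lt_abs_empiricalMean_sub_sum_le [MeasurableSingletonClass X]
    (h0 : ∀ x, 0 ≤ p x) (h1 : ∑ x, p x = 1) {ι : Type*} (I : Finset ι) {g : ι → X → ℝ} {B : ℝ}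
    (hB : ∀ i ∈ I, ∀ x, |g i x| ≤ B) (k : ℕ) [NeZero k] {η : ℝ} (hη : 0 < η) :
    (Measure.pi fun _ : Fin k => discMeasure p)
      {x | ∃ i ∈ I, B * Real.sqrt (2 * Real.log (2 * I.card / η) / k)
        < |empiricalMean (g i) x - ∑ y, p y * g i y|} ≤ ENNReal.ofReal η := by
  have := isProbabilityMeasure_discMeasure h0 h1
  simpa only [integral_discMeasure h0] using
    measure_pi_exists_lt_abs_empiricalMean_sub_integral_le (ν := discMeasure p) I
      (fun i _ => (measurable_of_countable (g i)).aemeasurable)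
      (fun i hi => ae_of_all _ (hB i hi)) k hη

end DiscreteMeasure

section QuadraticGrowth

lemma modulus_norm_sub_le_of_isMaxOn {E : Type*} [NormedAddCommGroup E] [NormedSpace ℝ E]
    {s : Set E} {φ : ℝ → ℝ} {f : E → ℝ} (hf : UniformConcaveOn s φ f) {x y : E} (hx : x ∈ s)
    (hmax : IsMaxOn f s x) (hy : y ∈ s) : φ ‖x - y‖ ≤ f x - f y := by
  have hstep : ∀ t ∈ Set.Ioo (0 : ℝ) 1, (1 - t) * φ ‖x - y‖ ≤ f x - f y := by
    rintro t ⟨ht0, ht1⟩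
    have hconc := hf.2 hx hy (sub_nonneg.2 ht1.le) ht0.le (sub_add_cancel 1 t)
    have hle := hmax (hf.1 hx hy (sub_nonneg.2 ht1.le) ht0.le (sub_add_cancel 1 t))
    simp only [smul_eq_mul] at hconc
    refine le_of_mul_le_mul_left ?_ ht0
    linarith [show f ((1 - t) • x + t • y) ≤ f x from hle]
  have hlim : Filter.Tendsto (fun t : ℝ => (1 - t) * φ ‖x - y‖)
      (nhdsWithin 0 (Set.Ioi 0)) (nhds (φ ‖x - y‖)) := by
    have hcont : Continuous fun t : ℝ => (1 - t) * φ ‖x - y‖ := by fun_prop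
    simpa using (hcont.tendsto 0).mono_left nhdsWithin_le_nhds
  exact le_of_tendsto hlim (Filter.eventually_of_mem (Ioo_mem_nhdsGT zero_lt_one) hstep)

variable {ι : Type*} [Fintype ι] {E : ι → Type*} {C : ∀ i, Set (E i)} {f : ∀ i, E i → ℝ}

lemma isMaxOn_apply_of_isMaxOn_sum_pi {x : ∀ i, E i} (hx : x ∈ Set.univ.pi C)
    (hmax : IsMaxOn (fun x => ∑ i, f i (x i)) (Set.univ.pi C) x) (i : ι) :
    IsMaxOn (f i) (C i) (x i) := by
  classical
  intro y hy
  have hle : ∑ j, f j (Function.update x i y j) ≤ ∑ j, f j (x j) :=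
    hmax (Set.update_mem_pi_iff_of_mem hx |>.2 fun _ => hy)
  have hrest : ∑ j ∈ {i}ᶜ, f j (Function.update x i y j) = ∑ j ∈ {i}ᶜ, f j (x j) :=
    Finset.sum_congr rfl fun j hj => by
      rw [Function.update_of_ne (by simpa using hj)]
  rw [Fintype.sum_eq_add_sum_compl i, Fintype.sum_eq_add_sum_compl i, hrest,
    Function.update_self] at hle
  exact le_of_add_le_add_right hle

lemma sum_modulus_norm_sub_le_of_isMaxOn_pi [∀ i, NormedAddCommGroup (E i)]
    [∀ i, NormedSpace ℝ (E i)] {φ : ι → ℝ → ℝ} (hf : ∀ i, UniformConcaveOn (C i) (φ i) (f i))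
    {x y : ∀ i, E i} (hx : x ∈ Set.univ.pi C)
    (hmax : IsMaxOn (fun x => ∑ i, f i (x i)) (Set.univ.pi C) x) (hy : y ∈ Set.univ.pi C) :
    ∑ i, φ i ‖x i - y i‖ ≤ ∑ i, f i (x i) - ∑ i, f i (y i) := by
  rw [← Finset.sum_sub_distrib]
  exact Finset.sum_le_sum fun i _ => modulus_norm_sub_le_of_isMaxOn (hf i) (hx i trivial)
    (isMaxOn_apply_of_isMaxOn_sum_pi hx hmax i) (hy i trivial)

end QuadraticGrowth

section Lagrangian

/-- The integrand `x e − α f(x)` of the `w`-dependent part of the Lagrangian, at a Bellman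
residual `e` and a density ratio `x`. Both Lagrangians average it: the population one with
`e = e_v(s,a)`, the empirical one with the sampled residual `tdError`. -/
def lagIntegrand (f : ℝ → ℝ) (α e x : ℝ) : ℝ := x * e - α * f x

/-- The Bellman residual `r(s,a) + γ v(s') − v(s)` of `v` at a single transition `((s,a),s')`. -/
def tdError {S A : Type*} (r : S → A → ℝ) (γ : ℝ) (v : S → ℝ) (x : (S × A) × S) : ℝ :=
  r x.1.1 x.1.2 + γ * v x.2 - v x.1.1

/-- The contribution of one transition `((s,a),s')` to the empirical Lagrangian. -/
def sampleTerm {S A : Type*} (r : S → A → ℝ) (γ : ℝ) (f : ℝ → ℝ) (α : ℝ) (v : S → ℝ)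
    (w : S → A → ℝ) (x : (S × A) × S) : ℝ :=
  lagIntegrand f α (tdError r γ v x) (w x.1.1 x.1.2)

lemma uniformConcaveOn_mul_lagIntegrand {s : Set ℝ} {M : ℝ} {f : ℝ → ℝ}
    (hf : StrongConvexOn s M f) {α p : ℝ} (hα : 0 ≤ α) (hp : 0 ≤ p) (e : ℝ) :
    UniformConcaveOn s (fun d => p * (α * M / 2 * d ^ 2)) fun x => p * lagIntegrand f α e x := by
  refine ⟨hf.1, fun x hx y hy a b ha hb hab => ?_⟩
  have hconv := mul_le_mul_of_nonneg_left (hf.2 hx hy ha hb hab) (mul_nonneg hp hα)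
  simp only [smul_eq_mul, lagIntegrand] at hconv ⊢
  linarith

lemma abs_lagIntegrand_le {f : ℝ → ℝ} {α e x Be Bf Bw : ℝ} (hα : 0 ≤ α) (he : |e| ≤ Be)
    (hx : |x| ≤ Bw) (hf : |f x| ≤ Bf) : |lagIntegrand f α e x| ≤ α * Bf + Bw * Be :=
  calc |x * e - α * f x| ≤ |x| * |e| + α * |f x| := by
        simpa only [abs_mul, abs_of_nonneg hα] using abs_sub (x * e) (α * f x)
    _ ≤ Bw * Be + α * Bf := by
        gcongr
        exact (abs_nonneg x).trans hx
    _ = α * Bf + Bw * Be := add_comm _ _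

lemma abs_tdError_le {S A : Type*} {r : S → A → ℝ} {γ R Bv : ℝ} {v : S → ℝ} (hγ : 0 ≤ γ)
    (hr : ∀ s a, |r s a| ≤ R) (hv : ∀ s, |v s| ≤ Bv) (x : (S × A) × S) :
    |tdError r γ v x| ≤ (1 + γ) * Bv + R :=
  calc |r x.1.1 x.1.2 + γ * v x.2 - v x.1.1| ≤ |r x.1.1 x.1.2| + γ * |v x.2| + |v x.1.1| := by
        refine (abs_sub _ _).trans (add_le_add_left ((abs_add_le _ _).trans_eq ?_) _)
        rw [abs_mul, abs_of_nonneg hγ]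
    _ ≤ R + γ * Bv + Bv := by
        gcongr
        exacts [hr _ _, hv _, hv _]
    _ = (1 + γ) * Bv + R := by ring

lemma abs_sampleTerm_le {S A : Type*} {r : S → A → ℝ} {γ R Bv α Bf Bw : ℝ} {f : ℝ → ℝ}
    (hγ : 0 ≤ γ) (hα : 0 ≤ α) (hr : ∀ s a, |r s a| ≤ R) (hf : ∀ x ∈ Set.Icc 0 Bw, |f x| ≤ Bf)
    {v : S → ℝ} (hv : ∀ s, |v s| ≤ Bv) {w : S → A → ℝ} (hw : ∀ s a, 0 ≤ w s a ∧ w s a ≤ Bw)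
    (x : (S × A) × S) : |sampleTerm r γ f α v w x| ≤ α * Bf + Bw * ((1 + γ) * Bv + R) :=
  have hwx := hw x.1.1 x.1.2
  abs_lagIntegrand_le hα (abs_tdError_le hγ hr hv x) ((abs_of_nonneg hwx.1).trans_le hwx.2)
    (hf _ hwx)

lemma Lag_eq_sum_lagIntegrand (P : S → A → S → ℝ) (r : S → A → ℝ) (μ0 : S → ℝ) (γ : ℝ)
    (dD : S → A → ℝ) (f : ℝ → ℝ) (α : ℝ) (v : S → ℝ) (w : S → A → ℝ) :
    Lag P r μ0 γ dD f α v w = (1 - γ) * ∑ s, μ0 s * v s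
      + ∑ x : S × A, dD x.1 x.2 * lagIntegrand f α (eV P r γ v x.1 x.2) (w x.1 x.2) := by
  simp only [Lag, lagIntegrand, Fintype.sum_prod_type, mul_sub, Finset.sum_sub_distrib,
    Finset.mul_sum, mul_left_comm α]
  ring

lemma empLag_eq_empiricalMean {S A : Type*} (r : S → A → ℝ) (γ : ℝ) (f : ℝ → ℝ) (α : ℝ)
    {n n0 : ℕ} (D : Fin n → (S × A) × S) (D0 : Fin n0 → S) (v : S → ℝ) (w : S → A → ℝ) :
    empLag r γ f α D D0 v w
      = (1 - γ) * empiricalMean v D0 + empiricalMean (sampleTerm r γ f α v w) D := by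
  simp only [empLag, empiricalMean, sampleTerm, lagIntegrand, tdError, Finset.sum_sub_distrib,
    ← Finset.mul_sum]
  ring

lemma sum_tupleWeight_mul_sampleTerm {P : S → A → S → ℝ} (hP : ∀ s a, ∑ s', P s a s' = 1)
    (r : S → A → ℝ) (γ : ℝ) (dD : S → A → ℝ) (f : ℝ → ℝ) (α : ℝ) (v : S → ℝ)
    (w : S → A → ℝ) :
    ∑ x, tupleWeight P dD x * sampleTerm r γ f α v w x
      = ∑ x : S × A, dD x.1 x.2 * lagIntegrand f α (eV P r γ v x.1 x.2) (w x.1 x.2) := by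
  rw [Fintype.sum_prod_type]
  refine Finset.sum_congr rfl fun ⟨s, a⟩ _ => ?_
  have hterm (s' : S) :
      tupleWeight P dD ((s, a), s') * sampleTerm r γ f α v w ((s, a), s')
        = dD s a * lagIntegrand f α (r s a - v s) (w s a) * P s a s'
          + dD s a * w s a * γ * (P s a s' * v s') := by
    simp only [tupleWeight, sampleTerm, lagIntegrand, tdError]
    ring
  simp only [hterm, Finset.sum_add_distrib, ← Finset.mul_sum, hP, eV, lagIntegrand]
  ring

lemma abs_empLag_sub_Lag_le {P : S → A → S → ℝ} (hP : ∀ s a, ∑ s', P s a s' = 1)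
    {r : S → A → ℝ} {μ0 : S → ℝ} {γ : ℝ} (hγ : γ ≤ 1) {dD : S → A → ℝ} {f : ℝ → ℝ} {α : ℝ}
    {n n0 : ℕ} {D : Fin n → (S × A) × S} {D0 : Fin n0 → S} {v : S → ℝ} {w : S → A → ℝ}
    {ε₀ ε : ℝ} (h₀ : |empiricalMean v D0 - ∑ s, μ0 s * v s| ≤ ε₀)
    (h : |empiricalMean (sampleTerm r γ f α v w) D
      - ∑ x, tupleWeight P dD x * sampleTerm r γ f α v w x| ≤ ε) :
    |empLag r γ f α D D0 v w - Lag P r μ0 γ dD f α v w| ≤ (1 - γ) * ε₀ + ε := by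
  rw [empLag_eq_empiricalMean, Lag_eq_sum_lagIntegrand, ← sum_tupleWeight_mul_sampleTerm hP,
    add_sub_add_comm, ← mul_sub]
  refine (abs_add_le _ _).trans (add_le_add ?_ h)
  rw [abs_mul, abs_of_nonneg (sub_nonneg.2 hγ)]
  exact mul_le_mul_of_nonneg_left h₀ (sub_nonneg.2 hγ)

lemma sum_tupleWeight {P : S → A → S → ℝ} (hP : ∀ s a, ∑ s', P s a s' = 1) {dD : S → A → ℝ}
    (hdD : ∑ s, ∑ a, dD s a = 1) : ∑ x, tupleWeight P dD x = 1 := by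
  simp only [Fintype.sum_prod_type, tupleWeight, ← Finset.mul_sum, hP, mul_one, hdD]

end Lagrangian

section SaddlePoint

variable {P : S → A → S → ℝ} {r : S → A → ℝ} {μ0 : S → ℝ} {γ : ℝ} {dD : S → A → ℝ}
  {f : ℝ → ℝ} {α : ℝ} {v : S → ℝ} {w : S → A → ℝ}

lemma IsSaddle.isSaddleB (h : IsSaddle P r μ0 γ dD f α v w) {Bw : ℝ}
    (hw : ∀ s a, w s a ≤ Bw) : IsSaddleB P r μ0 γ dD f α Bw v w :=
  ⟨fun s a => ⟨h.1 s a, hw s a⟩, h.2.1, fun w' hw' => h.2.2 w' fun s a => (hw' s a).1⟩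

lemma IsSaddleB.quadratic_growth {Bw M : ℝ} (h : IsSaddleB P r μ0 γ dD f α Bw v w)
    (hα : 0 ≤ α) (hdD : ∀ s a, 0 ≤ dD s a) (hf : StrongConvexOn (Set.Icc 0 Bw) M f)
    {w' : S → A → ℝ} (hw' : ∀ s a, 0 ≤ w' s a ∧ w' s a ≤ Bw) :
    α * M / 2 * l2nrm dD (fun s a => w' s a - w s a) ^ 2
      ≤ Lag P r μ0 γ dD f α v w - Lag P r μ0 γ dD f α v w' := by
  have hmax : IsMaxOn (fun u : S × A → ℝ =>
      ∑ x, dD x.1 x.2 * lagIntegrand f α (eV P r γ v x.1 x.2) (u x))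
      (Set.univ.pi fun _ => Set.Icc 0 Bw) (Function.uncurry w) := fun u hu => by
    have hle := h.2.2 (Function.curry u) fun s a => hu (s, a) trivial
    simp only [Lag_eq_sum_lagIntegrand, add_le_add_iff_left] at hle
    exact hle
  have hgrowth := sum_modulus_norm_sub_le_of_isMaxOn_pi
    (fun x : S × A => uniformConcaveOn_mul_lagIntegrand hf hα (hdD x.1 x.2) (eV P r γ v x.1 x.2))
    (fun x _ => h.1 x.1 x.2) hmax (y := Function.uncurry w') fun x _ => hw' x.1 x.2
  have hnorm : α * M / 2 * l2nrm dD (fun s a => w' s a - w s a) ^ 2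
      = ∑ x : S × A, dD x.1 x.2 * (α * M / 2 * ‖w x.1 x.2 - w' x.1 x.2‖ ^ 2) := by
    rw [l2nrm, Real.sq_sqrt (Finset.sum_nonneg fun s _ => Finset.sum_nonneg fun a _ =>
      mul_nonneg (hdD s a) (sq_nonneg _)), Fintype.sum_prod_type]
    simp only [Finset.mul_sum, Real.norm_eq_abs, sq_abs, sub_sq_comm (w' _ _), mul_left_comm]
  rw [hnorm, Lag_eq_sum_lagIntegrand, Lag_eq_sum_lagIntegrand, add_sub_add_left_eq_sub]
  exact hgrowth

lemma IsProRLOutput.Lag_sub_Lag_le {V : Finset (S → ℝ)} {W : Finset (S → A → ℝ)} {n n0 : ℕ}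
    {D : Fin n → (S × A) × S} {D0 : Fin n0 → S} {vhat : S → ℝ} {what : S → A → ℝ}
    (h : IsProRLOutput r γ f α V W D D0 vhat what)
    (hmin : ∀ v' ∈ V, Lag P r μ0 γ dD f α v w ≤ Lag P r μ0 γ dD f α v' w)
    (hv : v ∈ V) (hw : w ∈ W) {ε : ℝ}
    (hε : ∀ v ∈ V, ∀ w ∈ W, |empLag r γ f α D D0 v w - Lag P r μ0 γ dD f α v w| ≤ ε) :
    Lag P r μ0 γ dD f α v w - Lag P r μ0 γ dD f α v what ≤ 2 * ε := by
  obtain ⟨-, hwhat, hvhat, hmax⟩ := h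
  obtain ⟨u, hu, humin⟩ := V.exists_min_image (fun v => empLag r γ f α D D0 v w) ⟨v, hv⟩
  have hlower : Lag P r μ0 γ dD f α v w - ε ≤ empLag r γ f α D D0 vhat what :=
    calc Lag P r μ0 γ dD f α v w - ε ≤ Lag P r μ0 γ dD f α u w - ε := by gcongr; exact hmin u hu
      _ ≤ empLag r γ f α D D0 u w := by linarith [(abs_le.1 (hε u hu w hw)).1]
      _ ≤ empLag r γ f α D D0 vhat what := hmax w hw u hu humin
  have hupper : empLag r γ f α D D0 vhat what ≤ Lag P r μ0 γ dD f α v what + ε :=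
    calc empLag r γ f α D D0 vhat what ≤ empLag r γ f α D D0 v what := hvhat v hv
      _ ≤ Lag P r μ0 γ dD f α v what + ε := by
        linarith [(abs_le.1 (hε v hv what hwhat)).2]
  linarith

lemma sum_abs_mul_sub_mul_le_l2nrm (hdD : ∀ s a, 0 ≤ dD s a)
    (hsum : ∑ s, ∑ a, dD s a = 1) (w w' : S → A → ℝ) :
    ∑ s, ∑ a, |w s a * dD s a - w' s a * dD s a| ≤ l2nrm dD (fun s a => w s a - w' s a) := by
  have habs : ∑ s, ∑ a, |w s a * dD s a - w' s a * dD s a|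
      = ∑ x : S × A, dD x.1 x.2 * |w x.1 x.2 - w' x.1 x.2| := by
    rw [Fintype.sum_prod_type]
    refine Finset.sum_congr rfl fun s _ => Finset.sum_congr rfl fun a _ => ?_
    rw [← sub_mul, abs_mul, abs_of_nonneg (hdD s a), mul_comm]
  have hjensen := Real.pow_arith_mean_le_arith_mean_pow Finset.univ
    (fun x : S × A => dD x.1 x.2) (fun x => |w x.1 x.2 - w' x.1 x.2|) (fun x _ => hdD x.1 x.2)
    (by rwa [Fintype.sum_prod_type]) (fun _ _ => abs_nonneg _) 2
  rw [habs, l2nrm]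
  refine Real.le_sqrt_of_sq_le (hjensen.trans_eq ?_)
  simp only [sq_abs, Fintype.sum_prod_type]

end SaddlePoint

section Sampling

variable [MeasurableSpace S] [MeasurableSpace A] [MeasurableSingletonClass S]
  [MeasurableSingletonClass A] {P : S → A → S → ℝ} {r : S → A → ℝ} {μ0 : S → ℝ} {γ : ℝ}
  {dD : S → A → ℝ}

lemma one_sub_le_dataMeasure_forall_abs_empLag_sub_Lag_le (hMDP : MDPAssumptions P r μ0 γ dD)
    {f : ℝ → ℝ} {α δ Bw Bf Bv : ℝ} (hα : 0 ≤ α) (hδ : 0 < δ)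
    (hf : ∀ x ∈ Set.Icc 0 Bw, |f x| ≤ Bf) {V : Finset (S → ℝ)} {W : Finset (S → A → ℝ)}
    (hV : ∀ v ∈ V, ∀ s, |v s| ≤ Bv) (hW : ∀ w ∈ W, ∀ s a, 0 ≤ w s a ∧ w s a ≤ Bw)
    (n n0 : ℕ) [NeZero n] [NeZero n0] :
    1 - ENNReal.ofReal δ ≤ dataMeasure P dD μ0 n n0 {ω | ∀ v ∈ V, ∀ w ∈ W,
      |empLag r γ f α ω.1 ω.2 v w - Lag P r μ0 γ dD f α v w|
        ≤ epsStat γ α Bv Bf Bw ((1 + γ) * Bv + 1) δ V.card W.card n n0} := by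
  have hweight (x : (S × A) × S) : 0 ≤ tupleWeight P dD x :=
    mul_nonneg (hMDP.dD_nonneg _ _) (hMDP.P_nonneg _ _ _)
  have hwsum := sum_tupleWeight hMDP.P_sum hMDP.dD_sum
  have hr (s : S) (a : A) : |r s a| ≤ 1 :=
    (abs_of_nonneg (hMDP.r_nonneg s a)).trans_le (hMDP.r_le_one s a)
  have hterm : ∀ p ∈ V ×ˢ W, ∀ x, |sampleTerm r γ f α p.1 p.2 x|
      ≤ α * Bf + Bw * ((1 + γ) * Bv + 1) := fun p hp =>
    have ⟨hpV, hpW⟩ := Finset.mem_product.1 hp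
    abs_sampleTerm_le hMDP.γ_nonneg hα hr hf (hV _ hpV) (hW _ hpW)
  have htrans := measure_pi_discMeasure_exists_lt_abs_empiricalMean_sub_sum_le hweight hwsum
    (V ×ˢ W) hterm n (half_pos hδ)
  have hinit := measure_pi_discMeasure_exists_lt_abs_empiricalMean_sub_sum_le
    (fun s => (hMDP.μ0_pos s).le) hMDP.μ0_sum V hV n0 (half_pos hδ)
  have := isProbabilityMeasure_discMeasure hweight hwsum
  have := isProbabilityMeasure_discMeasure (fun s => (hMDP.μ0_pos s).le) hMDP.μ0_sum
  have hbad := add_le_add htrans hinit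
  rw [← ENNReal.ofReal_add (half_pos hδ).le (half_pos hδ).le, add_halves] at hbad
  refine (tsub_le_tsub_left hbad 1).trans <|
    (one_sub_add_le_prod_compl_prod_compl _ _ _ _).trans (measure_mono ?_)
  rintro ⟨D, D0⟩ ⟨hD, hD0⟩ v hv w hw
  have hconst (c : ℝ) : 2 * c / (δ / 2) = 4 * c / δ := by ring
  simp only [Set.mem_compl_iff, Set.mem_ofPred_eq, not_exists, not_and, not_lt,
    Finset.card_product, Nat.cast_mul, hconst] at hD hD0
  rw [epsStat, mul_assoc]
  exact abs_empLag_sub_Lag_le hMDP.P_sum hMDP.γ_lt_one.le (hD0 v hv)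
    (hD (v, w) (Finset.mk_mem_product hv hw))

theorem stmt16_general (hMDP : MDPAssumptions P r μ0 γ dD) {f : ℝ → ℝ} {α δ Mf Bw Bf Bv : ℝ}
    (hα : 0 < α) (hδ : 0 < δ) (hMf : 0 < Mf) (hconv : StrongConvexOn (Set.Icc 0 Bw) Mf f)
    (hf : ∀ x ∈ Set.Icc 0 Bw, |f x| ≤ Bf) {vst : S → ℝ} {wst : S → A → ℝ}
    (hsad : IsSaddleB P r μ0 γ dD f α Bw vst wst) {V : Finset (S → ℝ)}
    {W : Finset (S → A → ℝ)} (hvst : vst ∈ V) (hwst : wst ∈ W)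
    (hW : ∀ w ∈ W, ∀ s a, 0 ≤ w s a ∧ w s a ≤ Bw) (hV : ∀ v ∈ V, ∀ s, |v s| ≤ Bv)
    {n n0 : ℕ} (hn : 0 < n) (hn0 : 0 < n0)
    {vhat : (Fin n → (S × A) × S) × (Fin n0 → S) → S → ℝ}
    {what : (Fin n → (S × A) × S) × (Fin n0 → S) → S → A → ℝ}
    (halg : ∀ ω, IsProRLOutput r γ f α V W ω.1 ω.2 (vhat ω) (what ω)) :
    1 - ENNReal.ofReal δ ≤ dataMeasure P dD μ0 n n0 {ω |
      l2nrm dD (fun s a => what ω s a - wst s a) ≤ Real.sqrt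
        (4 * epsStat γ α Bv Bf Bw ((1 + γ) * Bv + 1) δ V.card W.card n n0 / (α * Mf)) ∧
      ∑ s, ∑ a, |what ω s a * dD s a - wst s a * dD s a| ≤ Real.sqrt
        (4 * epsStat γ α Bv Bf Bw ((1 + γ) * Bv + 1) δ V.card W.card n n0 / (α * Mf))} := by
  have : NeZero n := ⟨hn.ne'⟩
  have : NeZero n0 := ⟨hn0.ne'⟩
  refine (one_sub_le_dataMeasure_forall_abs_empLag_sub_Lag_le hMDP hα.le hδ hf hV hW n n0).trans
    (measure_mono fun ω hω => ?_)
  have hopt := (halg ω).Lag_sub_Lag_le (fun v _ => hsad.2.1 v) hvst hwst hω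
  have hgrowth := hsad.quadratic_growth hα.le hMDP.dD_nonneg hconv (hW _ (halg ω).2.1)
  have hl2 := Real.le_sqrt_of_sq_le <| (le_div_iff₀' (mul_pos hα hMf)).2 <|
    show α * Mf * l2nrm dD (fun s a => what ω s a - wst s a) ^ 2
      ≤ 4 * epsStat γ α Bv Bf Bw ((1 + γ) * Bv + 1) δ V.card W.card n n0 by linarith
  exact ⟨hl2, (sum_abs_mul_sub_mul_le_l2nrm hMDP.dD_nonneg hMDP.dD_sum _ _).trans hl2⟩

end Sampling

/-- Lemma 8: `‖ŵ − w*_α‖_{2,d^D} ≤ √(4 ε_stat/(α M_f))` and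
`‖d̂ − d*_α‖₁ ≤ √(4 ε_stat/(α M_f))`. -/
theorem stmt16
    {S A : Type*} [Fintype S] [Fintype A] [Nonempty S] [Nonempty A]
    [MeasurableSpace S] [MeasurableSpace A]
    [MeasurableSingletonClass S] [MeasurableSingletonClass A]
    (P : S → A → S → ℝ) (r : S → A → ℝ) (μ0 : S → ℝ) (γ : ℝ) (dD : S → A → ℝ)
    (hMDP : MDPAssumptions P r μ0 γ dD)
    (f f' : ℝ → ℝ) (α δ : ℝ) (hα : 0 < α) (hδ0 : 0 < δ) (hδ1 : δ < 1)
    (Mf Bw Bf' Bf Bv Be : ℝ)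
    (hreg : RegAssumptions f f' Mf Bw Bf' Bf) (hfnn : ∀ x, 0 ≤ f x)
    (hBv : Bv = (α * Bf' + 1) / (1 - γ)) (hBe : Be = (1 + γ) * Bv + 1)
    (vst : S → ℝ) (wst : S → A → ℝ)
    (hsad : IsSaddle P r μ0 γ dD f α vst wst)
    (V : Finset (S → ℝ)) (W : Finset (S → A → ℝ))
    (hA1 : ∀ s a, dstar dD wst s a ≤ Bw * dD s a)
    (hA2 : vst ∈ V) (hA3 : wst ∈ W)
    (hA4 : ∀ w ∈ W, ∀ s a, 0 ≤ w s a ∧ w s a ≤ Bw)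
    (hA6 : ∀ v ∈ V, ∀ s, |v s| ≤ Bv)
    (n n0 : ℕ) (hn : 0 < n) (hn0 : 0 < n0)
    (vhat : (Fin n → (S × A) × S) × (Fin n0 → S) → S → ℝ)
    (what : (Fin n → (S × A) × S) × (Fin n0 → S) → S → A → ℝ)
    (halg : ∀ ω, IsProRLOutput r γ f α V W ω.1 ω.2 (vhat ω) (what ω)) :
    1 - ENNReal.ofReal δ ≤
      dataMeasure P dD μ0 n n0 {ω |
        l2nrm dD (fun s a => what ω s a - wst s a)
          ≤ Real.sqrt (4 * epsStat γ α Bv Bf Bw Be δ V.card W.card n n0 / (α * Mf)) ∧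
        (∑ s : S, ∑ a : A, |what ω s a * dD s a - wst s a * dD s a|)
          ≤ Real.sqrt (4 * epsStat γ α Bv Bf Bw Be δ V.card W.card n n0 / (α * Mf)) } := by
  subst hBe
  exact stmt16_general hMDP hα hδ0 hreg.Mf_pos
    ⟨convex_Icc 0 Bw, fun x _ y _ => hreg.strong.2 trivial trivial⟩
    (fun x hx => hreg.f_bdd x hx.1 hx.2) (hsad.isSaddleB fun s a => (hA4 wst hA3 s a).2)
    hA2 hA3 hA4 hA6 hn hn0 halg

end ProRL
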